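/- Let n be a positive integer, let σ be a decorated permutation of order n, and let a < b be integers with b ≤ σ(a) < σ(b) ≤ a + n. Then σ ∘ t_{a,b} is again a decorated permutation of order n, and ∑_{i=1}^n ((σ ∘ t_{a,b})(i) − i) = ∑_{i=1}^n (σ(i) − i). -/

import Mathlib

/-- A decorated permutation of order `n`: a bijection `σ : ℤ → ℤ` with
`σ (i + n) = σ i + n` and `i ≤ σ i ≤ i + n` for all `i`. -/
def IsDecoratedPerm (n : ℤ) (σ : ℤ → ℤ) : Prop :=
  Function.Bijective σ ∧ (∀ i : ℤ, σ (i + n) = σ i + n) ∧ ∀ i : ℤ, i ≤ σ i ∧ σ i ≤ i + n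

/-- The affine transposition `t_{a,b}`: swaps `a + m*n` and `b + m*n` for every `m : ℤ`
and fixes all integers not congruent to `a` or `b` modulo `n`. -/
def affT (n a b : ℤ) (i : ℤ) : ℤ :=
  if (i - a) % n = 0 then i + (b - a)
  else if (i - b) % n = 0 then i - (b - a)
  else i

/-!
Each decorated permutation and each transposition `t_{a,b}` with `a ≢ b` modulo `n` commutes with
the translation by `n`, so their displacements `i ↦ f i - i` depend only on `i` modulo `n`.
Consequently the sum of the displacements over a period is additive under composition. It vanishes
on `t_{a,b}`, which is an involution.
-/

open scoped AddConstMap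

section Periodic

variable {n : ℤ}

theorem apply_eq_of_periodic_of_modEq {α : Type*} {g : ℤ → α} (hg : Function.Periodic g n)
    {i j : ℤ} (hij : i ≡ j [ZMOD n]) : g i = g j := by
  obtain ⟨m, rfl⟩ := Int.modEq_iff_add_fac.mp hij
  rw [mul_comm]
  exact (hg.int_mul m i).symm

theorem periodic_apply_sub_self {F G : Type*} [AddCommGroup G] {p : G} [FunLike F G G]
    [AddConstMapClass F G G p p] (f : F) : Function.Periodic (fun x ↦ f x - x) p := fun x ↦ by
  simp only [AddConstMapClass.map_add_const, add_sub_add_right_eq_sub]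

theorem apply_sub_self_eq_of_modEq {F : Type*} [FunLike F ℤ ℤ] [AddConstMapClass F ℤ ℤ n n]
    (f : F) {i j : ℤ} (hij : i ≡ j [ZMOD n]) : f i - i = f j - j :=
  apply_eq_of_periodic_of_modEq (periodic_apply_sub_self f) hij

theorem toIocMod_modEq (hn : 0 < n) (c i : ℤ) : toIocMod hn c i ≡ i [ZMOD n] :=
  Int.modEq_iff_dvd.mpr ⟨toIocDiv hn c i, by rw [self_sub_toIocMod, smul_eq_mul, mul_comm]⟩

theorem toIocMod_apply_toIocMod {F G H : Type*}
    [AddCommGroup G] [LinearOrder G] [IsOrderedAddMonoid G] [Archimedean G]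
    [AddCommGroup H] [LinearOrder H] [IsOrderedAddMonoid H] [Archimedean H]
    {p : G} {q : H} [FunLike F G H] [AddConstMapClass F G H p q]
    (hp : 0 < p) (hq : 0 < q) (c : G) (d : H) (f : F) (x : G) :
    toIocMod hq d (f (toIocMod hp c x)) = toIocMod hq d (f x) := by
  rw [← self_sub_toIocDiv_zsmul hp c x, AddConstMapClass.map_sub_zsmul, toIocMod_sub_zsmul]

theorem sum_Icc_one_comp_of_periodic {M : Type*} [AddCommMonoid M] {g : ℤ → M}
    (hg : Function.Periodic g n) (e : ℤ ≃+c[n, n] ℤ) :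
    ∑ i ∈ Finset.Icc (1 : ℤ) n, g (e i) = ∑ i ∈ Finset.Icc (1 : ℤ) n, g i := by
  rcases le_or_gt n 0 with hn | hn
  · simp only [Finset.Icc_eq_empty_of_lt (hn.trans_lt one_pos), Finset.sum_empty]
  have mem_Icc (i : ℤ) : toIocMod hn 0 i ∈ Finset.Icc (1 : ℤ) n := by
    have := toIocMod_mem_Ioc hn 0 i
    rw [Set.mem_Ioc] at this
    rw [Finset.mem_Icc]
    lia
  have eq_self {i : ℤ} (hi : i ∈ Finset.Icc (1 : ℤ) n) : toIocMod hn 0 i = i := by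
    rw [toIocMod_eq_self, Set.mem_Ioc]
    rw [Finset.mem_Icc] at hi
    lia
  refine Finset.sum_nbij' (fun i ↦ toIocMod hn 0 (e i)) (fun i ↦ toIocMod hn 0 (e.symm i))
    (fun i _ ↦ mem_Icc (e i)) (fun i _ ↦ mem_Icc (e.symm i)) (fun i hi ↦ ?_) (fun i hi ↦ ?_)
    (fun i _ ↦ apply_eq_of_periodic_of_modEq hg (toIocMod_modEq hn 0 (e i)).symm)
  · rw [toIocMod_apply_toIocMod, e.symm_apply_apply, eq_self hi]
  · rw [toIocMod_apply_toIocMod, e.apply_symm_apply, eq_self hi]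

end Periodic

/-- The sum of the displacements `f i - i` over the period `1, …, n`. For a decorated permutation of
order `n` this is `n` times the average displacement. -/
noncomputable def totalDisplacement (n : ℤ) (f : ℤ → ℤ) : ℤ :=
  ∑ i ∈ Finset.Icc (1 : ℤ) n, (f i - i)

section TotalDisplacement

variable {n : ℤ}

theorem totalDisplacement_comp {F : Type*} [FunLike F ℤ ℤ] [AddConstMapClass F ℤ ℤ n n] (f : F)
    (e : ℤ ≃+c[n, n] ℤ) :
    totalDisplacement n (f ∘ e) = totalDisplacement n f + totalDisplacement n e := by
  calc ∑ i ∈ Finset.Icc (1 : ℤ) n, (f (e i) - i)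
      = ∑ i ∈ Finset.Icc (1 : ℤ) n, (f (e i) - e i) + ∑ i ∈ Finset.Icc (1 : ℤ) n, (e i - i) := by
        simp only [← Finset.sum_add_distrib, sub_add_sub_cancel]
    _ = ∑ i ∈ Finset.Icc (1 : ℤ) n, (f i - i) + ∑ i ∈ Finset.Icc (1 : ℤ) n, (e i - i) := by
        rw [sum_Icc_one_comp_of_periodic (periodic_apply_sub_self f) e]

theorem totalDisplacement_eq_zero_of_involutive {e : ℤ ≃+c[n, n] ℤ} (he : Function.Involutive e) :
    totalDisplacement n e = 0 := by
  have h := totalDisplacement_comp e e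
  have h_id : totalDisplacement n id = 0 := Finset.sum_eq_zero fun i _ ↦ sub_self i
  rw [he.comp_self, h_id] at h
  lia

end TotalDisplacement

section AffT

variable {n a b i : ℤ}

theorem affT_eq_ite_modEq (n a b i : ℤ) :
    affT n a b i =
      if i ≡ a [ZMOD n] then i + (b - a) else if i ≡ b [ZMOD n] then i - (b - a) else i := by
  simp only [affT, Int.ModEq, Int.emod_eq_emod_iff_emod_sub_eq_zero]

theorem affT_of_modEq_left (hi : i ≡ a [ZMOD n]) : affT n a b i = i + (b - a) := by
  rw [affT_eq_ite_modEq, if_pos hi]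

theorem affT_of_modEq_right (hab : ¬a ≡ b [ZMOD n]) (hi : i ≡ b [ZMOD n]) :
    affT n a b i = i - (b - a) := by
  rw [affT_eq_ite_modEq, if_neg fun h ↦ hab (h.symm.trans hi), if_pos hi]

theorem affT_of_not_modEq (ha : ¬i ≡ a [ZMOD n]) (hb : ¬i ≡ b [ZMOD n]) : affT n a b i = i := by
  rw [affT_eq_ite_modEq, if_neg ha, if_neg hb]

theorem affT_involutive (hab : ¬a ≡ b [ZMOD n]) : Function.Involutive (affT n a b) := by
  intro i
  by_cases ha : i ≡ a [ZMOD n]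
  · have : i + (b - a) ≡ b [ZMOD n] := by simpa using ha.add_right (b - a)
    rw [affT_of_modEq_left ha, affT_of_modEq_right hab this, add_sub_cancel_right]
  by_cases hb : i ≡ b [ZMOD n]
  · have : i - (b - a) ≡ a [ZMOD n] := by simpa using hb.sub_right (b - a)
    rw [affT_of_modEq_right hab hb, affT_of_modEq_left this, sub_add_cancel]
  · rw [affT_of_not_modEq ha hb, affT_of_not_modEq ha hb]

theorem affT_add_modulus (n a b i : ℤ) : affT n a b (i + n) = affT n a b i + n := by
  simp only [affT, add_sub_right_comm i n, Int.add_emod_right]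
  split_ifs <;> ring

theorem not_modEq_of_apply_mem_Icc {F : Type*} [FunLike F ℤ ℤ] [AddConstMapClass F ℤ ℤ n n] (f : F)
    (hab : a ≠ b) (ha : f a ∈ Set.Icc b (b + n)) (hb : f b ∈ Set.Icc a (a + n)) :
    ¬a ≡ b [ZMOD n] := by
  intro h
  have h_eq := apply_sub_self_eq_of_modEq f h
  rw [Set.mem_Icc] at ha hb
  have h_lt : |b - a| < n := by
    rw [abs_lt]
    lia
  exact hab (sub_eq_zero.mp (Int.eq_zero_of_abs_lt_dvd h.dvd h_lt)).symm

/-- The transposition `t_{a,b}` as an element of the group of bijections of `ℤ` commuting with the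
translation by `n`. -/
def affTEquiv (hab : ¬a ≡ b [ZMOD n]) : ℤ ≃+c[n, n] ℤ where
  toEquiv := (affT_involutive hab).toPerm
  map_add_const' := affT_add_modulus n a b

theorem totalDisplacement_comp_affT {F : Type*} [FunLike F ℤ ℤ] [AddConstMapClass F ℤ ℤ n n]
    (f : F) (hab : ¬a ≡ b [ZMOD n]) :
    totalDisplacement n (f ∘ affT n a b) = totalDisplacement n f := by
  have h_affT : totalDisplacement n (affTEquiv hab) = 0 :=
    totalDisplacement_eq_zero_of_involutive (affT_involutive hab)
  calc totalDisplacement n (f ∘ affT n a b)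
      = totalDisplacement n f + totalDisplacement n (affTEquiv hab) :=
        totalDisplacement_comp f (affTEquiv hab)
    _ = totalDisplacement n f := by rw [h_affT, add_zero]

end AffT

namespace IsDecoratedPerm

variable {n a b : ℤ} {σ : ℤ → ℤ}

/-- A decorated permutation as a map commuting with the translation by `n`. -/
def toAddConstMap (hσ : IsDecoratedPerm n σ) : ℤ →+c[n, n] ℤ :=
  ⟨σ, hσ.2.1⟩

protected theorem apply_sub_self_eq_of_modEq (hσ : IsDecoratedPerm n σ) {i j : ℤ}
    (hij : i ≡ j [ZMOD n]) : σ i - i = σ j - j :=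
  apply_sub_self_eq_of_modEq hσ.toAddConstMap hij

theorem comp_affT (hσ : IsDecoratedPerm n σ) (hab : ¬a ≡ b [ZMOD n])
    (ha : σ a ∈ Set.Icc b (b + n)) (hb : σ b ∈ Set.Icc a (a + n)) :
    IsDecoratedPerm n (σ ∘ affT n a b) := by
  refine ⟨hσ.1.comp (affT_involutive hab).bijective, fun i ↦ ?_, fun i ↦ ?_⟩
  · simp only [Function.comp_apply, affT_add_modulus, hσ.2.1]
  rw [Set.mem_Icc] at ha hb
  rw [Function.comp_apply]
  by_cases hia : i ≡ a [ZMOD n]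
  · have hσi : σ (i + (b - a)) - (i + (b - a)) = σ b - b :=
      hσ.apply_sub_self_eq_of_modEq (by simpa using hia.add_right (b - a))
    rw [affT_of_modEq_left hia]
    lia
  by_cases hib : i ≡ b [ZMOD n]
  · have hσi : σ (i - (b - a)) - (i - (b - a)) = σ a - a :=
      hσ.apply_sub_self_eq_of_modEq (by simpa using hib.sub_right (b - a))
    rw [affT_of_modEq_right hab hib]
    lia
  · rw [affT_of_not_modEq hia hib]
    exact hσ.2.2 i

end IsDecoratedPerm

theorem boundary_transposition_decorated_and_sum_general {n a b : ℤ} {σ : ℤ → ℤ}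
    (hσ : IsDecoratedPerm n σ) (hab : a ≠ b) (ha : σ a ∈ Set.Icc b (b + n))
    (hb : σ b ∈ Set.Icc a (a + n)) :
    IsDecoratedPerm n (σ ∘ affT n a b) ∧
      ∑ i ∈ Finset.Icc (1 : ℤ) n, ((σ ∘ affT n a b) i - i)
        = ∑ i ∈ Finset.Icc (1 : ℤ) n, (σ i - i) := by
  have h_not_modEq := not_modEq_of_apply_mem_Icc hσ.toAddConstMap hab ha hb
  exact ⟨hσ.comp_affT h_not_modEq ha hb, totalDisplacement_comp_affT hσ.toAddConstMap h_not_modEq⟩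

/-- If `a < b` and `b ≤ σ a < σ b ≤ a + n`, then `σ ∘ t_{a,b}` is a
decorated permutation of order `n` and `∑_{i=1}^n ((σ ∘ t_{a,b}) i - i) = ∑_{i=1}^n (σ i - i)`. -/
theorem boundary_transposition_decorated_and_sum (n : ℤ) (hn : 0 < n) (σ : ℤ → ℤ)
    (hσ : IsDecoratedPerm n σ) (a b : ℤ) (hab : a < b)
    (h1 : b ≤ σ a) (h2 : σ a < σ b) (h3 : σ b ≤ a + n) :
    IsDecoratedPerm n (σ ∘ affT n a b) ∧
      ∑ i ∈ Finset.Icc (1 : ℤ) n, ((σ ∘ affT n a b) i - i)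
        = ∑ i ∈ Finset.Icc (1 : ℤ) n, (σ i - i) := by
  exact boundary_transposition_decorated_and_sum_general hσ hab.ne ⟨h1, by lia⟩ ⟨by lia, h3⟩
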